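/- The quantum determinant D = ad - bc + hac of the Jordanian quantum group is group-like: Δ(D) = D ⊗ D and ε(D) = 1, where ε(a)=ε(d)=1, ε(b)=ε(c)=0. -/

import Mathlib

open scoped TensorProduct

/-- Generators of the Jordanian quantum group algebra `A(R)`. -/
inductive JGen : Type | a | b | c | d

noncomputable def Fa : FreeAlgebra ℂ JGen := FreeAlgebra.ι ℂ JGen.a
noncomputable def Fb : FreeAlgebra ℂ JGen := FreeAlgebra.ι ℂ JGen.b
noncomputable def Fc : FreeAlgebra ℂ JGen := FreeAlgebra.ι ℂ JGen.c
noncomputable def Fd : FreeAlgebra ℂ JGen := FreeAlgebra.ι ℂ JGen.d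

/-- The six defining relations of the Jordanian quantum group `GL_{h,g}(2)`. -/
inductive JRel (h g : ℂ) : FreeAlgebra ℂ JGen → FreeAlgebra ℂ JGen → Prop
  | ca : JRel h g (Fc * Fa) (Fa * Fc - g • (Fc * Fc))
  | cd : JRel h g (Fc * Fd) (Fd * Fc - h • (Fc * Fc))
  | db : JRel h g (Fd * Fb) (Fb * Fd + g • (Fa * Fd - Fb * Fc + h • (Fa * Fc) - Fd * Fd))
  | ab : JRel h g (Fa * Fb) (Fb * Fa + h • (Fa * Fd - Fb * Fc + h • (Fa * Fc) - Fa * Fa))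
  | cb : JRel h g (Fc * Fb) (Fb * Fc - h • (Fa * Fc) - g • (Fd * Fc) + (g * h) • (Fc * Fc))
  | da : JRel h g (Fd * Fa) (Fa * Fd + h • (Fa * Fc) - g • (Fd * Fc))

/-- The Jordanian quantum group algebra `A(R)`. -/
abbrev JA (h g : ℂ) := RingQuot (JRel h g)

noncomputable def qa (h g : ℂ) : JA h g := RingQuot.mkAlgHom ℂ (JRel h g) Fa
noncomputable def qb (h g : ℂ) : JA h g := RingQuot.mkAlgHom ℂ (JRel h g) Fb
noncomputable def qc (h g : ℂ) : JA h g := RingQuot.mkAlgHom ℂ (JRel h g) Fc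
noncomputable def qd (h g : ℂ) : JA h g := RingQuot.mkAlgHom ℂ (JRel h g) Fd

/-- The quantum determinant `D = ad - bc + hac`. -/
noncomputable def qdet (h g : ℂ) : JA h g :=
  qa h g * qd h g - qb h g * qc h g + h • (qa h g * qc h g)

/-- The quantum determinant is group-like: any algebra homomorphisms `Δ`, `ε` given by
the matrix-element coproduct and counit on generators satisfy
`Δ(D) = D ⊗ D` and `ε(D) = 1`. -/
theorem qdet_grouplike (h g : ℂ) :
    (∀ Δ : JA h g →ₐ[ℂ] (JA h g ⊗[ℂ] JA h g),
      (Δ (qa h g) = qa h g ⊗ₜ qa h g + qb h g ⊗ₜ qc h g ∧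
       Δ (qb h g) = qa h g ⊗ₜ qb h g + qb h g ⊗ₜ qd h g ∧
       Δ (qc h g) = qc h g ⊗ₜ qa h g + qd h g ⊗ₜ qc h g ∧
       Δ (qd h g) = qc h g ⊗ₜ qb h g + qd h g ⊗ₜ qd h g) →
      Δ (qdet h g) = qdet h g ⊗ₜ qdet h g) ∧
    (∀ ε : JA h g →ₐ[ℂ] ℂ,
      (ε (qa h g) = 1 ∧ ε (qb h g) = 0 ∧ ε (qc h g) = 0 ∧ ε (qd h g) = 1) →
      ε (qdet h g) = 1) := by
  constructor
  · rintro Δ ⟨ha, hb, hc, hd⟩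
    have e1 : qa h g * qb h g - qb h g * qa h g + h • (qa h g * qa h g) = h • qdet h g := by
      have := RingQuot.mkAlgHom_rel ℂ (JRel.ab (h := h) (g := g))
      simp only [map_mul, map_add, map_sub, map_smul] at this
      change qa h g * qb h g = qb h g * qa h g + h • (qa h g * qd h g - qb h g * qc h g
        + h • (qa h g * qc h g) - qa h g * qa h g) at this
      rw [this, qdet]
      module
    have e2 : qc h g * qd h g - qd h g * qc h g + h • (qc h g * qc h g) = 0 := by
      have := RingQuot.mkAlgHom_rel ℂ (JRel.cd (h := h) (g := g))
      simp only [map_mul, map_sub, map_smul] at this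
      change qc h g * qd h g = qd h g * qc h g - h • (qc h g * qc h g) at this
      rw [this]
      module
    have e3 : qc h g * qb h g - qd h g * qa h g + h • (qc h g * qa h g) = - qdet h g := by
      have h1 := RingQuot.mkAlgHom_rel ℂ (JRel.cb (h := h) (g := g))
      have h2 := RingQuot.mkAlgHom_rel ℂ (JRel.da (h := h) (g := g))
      have h3 := RingQuot.mkAlgHom_rel ℂ (JRel.ca (h := h) (g := g))
      simp only [map_mul, map_add, map_sub, map_smul] at h1 h2 h3
      change qc h g * qb h g = qb h g * qc h g - h • (qa h g * qc h g) - g • (qd h g * qc h g)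
        + (g * h) • (qc h g * qc h g) at h1
      change qd h g * qa h g = qa h g * qd h g + h • (qa h g * qc h g)
        - g • (qd h g * qc h g) at h2
      change qc h g * qa h g = qa h g * qc h g - g • (qc h g * qc h g) at h3
      rw [h1, h2, h3, qdet]
      module
    have key : Δ (qdet h g) =
        (qa h g * qc h g) ⊗ₜ (qa h g * qb h g - qb h g * qa h g + h • (qa h g * qa h g))
        + (qa h g * qd h g) ⊗ₜ qdet h g
        + (qb h g * qc h g) ⊗ₜ (qc h g * qb h g - qd h g * qa h g + h • (qc h g * qa h g))
        + (qb h g * qd h g) ⊗ₜ (qc h g * qd h g - qd h g * qc h g + h • (qc h g * qc h g)) := by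
      simp only [qdet, map_add, map_sub, map_mul, map_smul, ha, hb, hc, hd, mul_add, add_mul,
        Algebra.TensorProduct.tmul_mul_tmul, TensorProduct.tmul_add, TensorProduct.tmul_sub,
        TensorProduct.tmul_smul, smul_add]
      abel
    have fin : ∀ D : JA h g, (qa h g * qc h g) ⊗ₜ[ℂ] (h • D) + (qa h g * qd h g) ⊗ₜ[ℂ] D
        + (qb h g * qc h g) ⊗ₜ[ℂ] (-D) + (qb h g * qd h g) ⊗ₜ[ℂ] (0 : JA h g)
        = qdet h g ⊗ₜ[ℂ] D := by
      intro D
      simp only [qdet, TensorProduct.add_tmul, TensorProduct.sub_tmul, TensorProduct.tmul_smul,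
        TensorProduct.smul_tmul', TensorProduct.tmul_neg, TensorProduct.tmul_zero]
      abel
    rw [key, e1, e2, e3, fin]
  · rintro ε ⟨ha, hb, hc, hd⟩
    simp [qdet, ha, hb, hc, hd]
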